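/- Let k and N be positive integers, let E₀, E₁, …, E_N ∈ ℂ^{N_1×N_2} be matrices with pairwise disjoint supports such that: (i) E₀ has at most k² nonzero entries, (ii) each E_i for 1 ≤ i ≤ N has at most k² nonzero entries, (iii) ‖E_i‖₁ ≥ k²·‖E_{i+1}‖_∞ for 1 ≤ i ≤ N−1, and (iv) ‖Σ_{i=1}^N E_i‖₁ ≤ ‖E₀‖₁, and set E = Σ_{i=0}^N E_i. Then ‖E‖_F ≤ 2·‖E₀ + E₁‖_F. -/

import Mathlib

/-!
Since the supports are disjoint, the entrywise functionals `l1norm` and `frob ^ 2` are additive over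
the blocks `E i` (`sum_entries_sum`). A block with at most `k²` nonzero entries satisfies
`‖E (i+1)‖_F² ≤ k² ‖E (i+1)‖_∞²`, so the decay hypothesis gives `k² ‖E (i+1)‖_F² ≤ ‖E i‖₁²` for
`i ≥ 1`. Summing, and bounding a sum of squares by the square of the sum,
`k² ∑_{i ≥ 2} ‖E i‖_F² ≤ (∑_{i ≥ 1} ‖E i‖₁)² ≤ ‖E 0‖₁² ≤ k² ‖E 0‖_F²`, the last step being
Cauchy–Schwarz on the support of `E 0`. Hence `‖E‖_F² ≤ 2 ‖E 0‖_F² + ‖E 1‖_F² ≤ 4 ‖E 0 + E 1‖_F²`.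
-/

open Matrix

/-- Entrywise ℓ1 norm of a matrix. -/
noncomputable def l1norm {m n : ℕ} (M : Matrix (Fin m) (Fin n) ℂ) : ℝ :=
  ∑ i, ∑ j, ‖M i j‖

/-- Frobenius norm of a matrix. -/
noncomputable def frob {m n : ℕ} (M : Matrix (Fin m) (Fin n) ℂ) : ℝ :=
  Real.sqrt (∑ i, ∑ j, ‖M i j‖ ^ 2)

/-- Entrywise ℓ∞ norm of a matrix: the maximum of the moduli of its entries. -/
noncomputable def linf {m n : ℕ} (M : Matrix (Fin m) (Fin n) ℂ) : ℝ :=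
  ⨆ p : Fin m × Fin n, ‖M p.1 p.2‖

/-- Support of a matrix: the set of index pairs of its nonzero entries. -/
def supp {m n : ℕ} (M : Matrix (Fin m) (Fin n) ℂ) : Set (Fin m × Fin n) :=
  {p | M p.1 p.2 ≠ 0}

/-- Square of the Frobenius norm; keeping it square-root free makes it additive over blocks with
disjoint supports. -/
noncomputable def frobSq {m n : ℕ} (M : Matrix (Fin m) (Fin n) ℂ) : ℝ :=
  ∑ i, ∑ j, ‖M i j‖ ^ 2

lemma frobSq_nonneg {m n : ℕ} (M : Matrix (Fin m) (Fin n) ℂ) : 0 ≤ frobSq M := by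
  unfold frobSq; positivity

lemma l1norm_nonneg {m n : ℕ} (M : Matrix (Fin m) (Fin n) ℂ) : 0 ≤ l1norm M := by
  unfold l1norm; positivity

/-- Any entrywise functional `M ↦ ∑ g (M i j)` with `g 0 = 0` is additive over a finite family of
matrices with pairwise disjoint supports: at each entry at most one term is nonzero. -/
lemma sum_entries_sum {m n : ℕ} (E : ℕ → Matrix (Fin m) (Fin n) ℂ) (S : Finset ℕ)
    (hS : ∀ a ∈ S, ∀ b ∈ S, a ≠ b → Disjoint (supp (E a)) (supp (E b)))
    (g : ℂ → ℝ) (hg : g 0 = 0) :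
    ∑ i, ∑ j, g ((∑ a ∈ S, E a) i j) = ∑ a ∈ S, ∑ i, ∑ j, g (E a i j) := by
  rw [Finset.sum_comm (s := S)]
  refine Finset.sum_congr rfl fun i _ => ?_
  rw [Finset.sum_comm (s := S)]
  refine Finset.sum_congr rfl fun j _ => ?_
  rw [Matrix.sum_apply]
  by_cases h : ∃ a ∈ S, E a i j ≠ 0
  · obtain ⟨a, ha, hne⟩ := h
    have hz : ∀ b ∈ S, b ≠ a → E b i j = 0 := by
      intro b hb hba
      by_contra hb0
      exact Set.disjoint_left.mp (hS b hb a ha hba) (show (i, j) ∈ supp (E b) from hb0) hne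
    rw [Finset.sum_eq_single_of_mem a ha hz,
      Finset.sum_eq_single_of_mem a ha fun b hb hba => by rw [hz b hb hba, hg]]
  · push Not at h
    rw [Finset.sum_eq_zero h, hg, Finset.sum_eq_zero fun a ha => by rw [h a ha, hg]]

/-- An entrywise sum with `g 0 = 0` only sees the support. -/
lemma sum_entries_eq_supp {m n : ℕ} (M : Matrix (Fin m) (Fin n) ℂ) (g : ℂ → ℝ) (hg : g 0 = 0) :
    ∑ i, ∑ j, g (M i j) = ∑ p ∈ (Set.toFinite (supp M)).toFinset, g (M p.1 p.2) := by
  rw [← Fintype.sum_prod_type' (f := fun i j => g (M i j))]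
  symm
  refine Finset.sum_subset (Finset.subset_univ _) fun p _ hp => ?_
  have : M p.1 p.2 = 0 := by simpa [supp] using hp
  rw [this, hg]

lemma frobSq_le_linf {m n : ℕ} (M : Matrix (Fin m) (Fin n) ℂ) {c : ℕ}
    (hc : (supp M).ncard ≤ c) : frobSq M ≤ c * linf M ^ 2 := by
  rw [frobSq, sum_entries_eq_supp M (fun z => ‖z‖ ^ 2) (by simp)]
  rw [Set.ncard_eq_toFinset_card _ (Set.toFinite (supp M))] at hc
  calc _ ≤ ∑ p ∈ (Set.toFinite (supp M)).toFinset, linf M ^ 2 := by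
        refine Finset.sum_le_sum fun p _ => ?_
        have : ‖M p.1 p.2‖ ≤ linf M :=
          le_ciSup (f := fun p : Fin m × Fin n => ‖M p.1 p.2‖) (Set.finite_range _).bddAbove p
        gcongr
    _ ≤ c * linf M ^ 2 := by
        rw [Finset.sum_const, nsmul_eq_mul]
        gcongr

/-- Cauchy–Schwarz on the support. -/
lemma l1norm_sq_le {m n : ℕ} (M : Matrix (Fin m) (Fin n) ℂ) {c : ℕ}
    (hc : (supp M).ncard ≤ c) : l1norm M ^ 2 ≤ c * frobSq M := by
  have h0 := frobSq_nonneg M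
  rw [frobSq, sum_entries_eq_supp M (fun z => ‖z‖ ^ 2) (by simp)] at *
  rw [l1norm, sum_entries_eq_supp M (fun z => ‖z‖) (by simp)]
  rw [Set.ncard_eq_toFinset_card _ (Set.toFinite (supp M))] at hc
  refine sq_sum_le_card_mul_sum_sq.trans ?_
  gcongr

theorem stmt5 (k N N1 N2 : ℕ) (hk : 0 < k) (hN : 0 < N)
    (E : ℕ → Matrix (Fin N1) (Fin N2) ℂ)
    (hdisj : ∀ i j, i ≤ N → j ≤ N → i ≠ j → Disjoint (supp (E i)) (supp (E j)))
    (h0 : (supp (E 0)).ncard ≤ k ^ 2)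
    (hi : ∀ i, 1 ≤ i → i ≤ N → (supp (E i)).ncard ≤ k ^ 2)
    (hdec : ∀ i, 1 ≤ i → i + 1 ≤ N → l1norm (E i) ≥ (k : ℝ) ^ 2 * linf (E (i + 1)))
    (hsum : l1norm (∑ i ∈ Finset.Icc 1 N, E i) ≤ l1norm (E 0)) :
    frob (∑ i ∈ Finset.range (N + 1), E i) ≤ 2 * frob (E 0 + E 1) := by
  have hE : frobSq (∑ i ∈ Finset.range (N + 1), E i) = ∑ i ∈ Finset.range (N + 1), frobSq (E i) :=
    sum_entries_sum E _ (fun a ha b hb => hdisj a b (by grind) (by grind)) (fun z => ‖z‖ ^ 2)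
      (by simp)
  have hE01 : frobSq (E 0 + E 1) = frobSq (E 0) + frobSq (E 1) := by
    have := sum_entries_sum E (Finset.range 2)
      (fun a ha b hb => hdisj a b (by grind) (by grind)) (fun z => ‖z‖ ^ 2) (by simp)
    simp only [Finset.sum_range_succ, Finset.sum_range_zero, zero_add] at this
    exact this
  have hl1 : l1norm (∑ i ∈ Finset.Icc 1 N, E i) = ∑ i ∈ Finset.Icc 1 N, l1norm (E i) :=
    sum_entries_sum E _ (fun a ha b hb => hdisj a b (by grind) (by grind)) (fun z => ‖z‖)
      (by simp)
  rw [hl1] at hsum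
  have hk2 : (0 : ℝ) < (k : ℝ) ^ 2 := by positivity
  obtain ⟨n, rfl⟩ : ∃ n, N = n + 1 := ⟨N - 1, by omega⟩
  have hstep : ∀ i ∈ Finset.range n,
      (k : ℝ) ^ 2 * frobSq (E (i + 2)) ≤ l1norm (E (i + 1)) ^ 2 := by
    intro i hin
    rw [Finset.mem_range] at hin
    have h1 := frobSq_le_linf (E (i + 2)) (hi (i + 2) (by omega) (by omega))
    have h2 := hdec (i + 1) (by omega) (by omega)
    have h3 : 0 ≤ linf (E (i + 2)) := Real.iSup_nonneg fun _ => norm_nonneg _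
    push_cast at h1
    calc (k : ℝ) ^ 2 * frobSq (E (i + 2))
        ≤ (k : ℝ) ^ 2 * ((k : ℝ) ^ 2 * linf (E (i + 2)) ^ 2) := by gcongr
      _ = ((k : ℝ) ^ 2 * linf (E (i + 2))) ^ 2 := by ring
      _ ≤ _ := by gcongr
  have htail : ∑ i ∈ Finset.range n, frobSq (E (i + 2)) ≤ frobSq (E 0) := by
    refine le_of_mul_le_mul_left ?_ hk2
    have hsub : ∑ i ∈ Finset.range n, l1norm (E (i + 1)) ≤ l1norm (E 0) := by
      refine le_trans ?_ hsum
      rw [← Finset.sum_image (f := fun i => l1norm (E i)) (g := fun i => i + 1) (by simp)]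
      exact Finset.sum_le_sum_of_subset_of_nonneg (by grind) fun _ _ _ => l1norm_nonneg _
    have hcs := l1norm_sq_le (E 0) h0
    push_cast at hcs
    calc (k : ℝ) ^ 2 * ∑ i ∈ Finset.range n, frobSq (E (i + 2))
        ≤ ∑ i ∈ Finset.range n, l1norm (E (i + 1)) ^ 2 := by
          rw [Finset.mul_sum]; exact Finset.sum_le_sum hstep
      _ ≤ (∑ i ∈ Finset.range n, l1norm (E (i + 1))) ^ 2 :=
          Finset.sum_sq_le_sq_sum_of_nonneg fun _ _ => l1norm_nonneg _
      _ ≤ l1norm (E 0) ^ 2 :=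
          pow_le_pow_left₀ (Finset.sum_nonneg fun _ _ => l1norm_nonneg _) hsub 2
      _ ≤ _ := hcs
  have p0 := frobSq_nonneg (E 0)
  have p1 := frobSq_nonneg (E 1)
  change √(frobSq _) ≤ 2 * √(frobSq _)
  rw [Real.sqrt_le_left (by positivity), mul_pow, Real.sq_sqrt (frobSq_nonneg _), hE, hE01,
    Finset.sum_range_succ', Finset.sum_range_succ']
  simp only [zero_add, add_assoc, Nat.reduceAdd] at *
  linarith
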